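/- arXiv:2303.00556 — 3 statements merged into one kernel-verified Lean document; each statement's English description precedes it below -/
import Mathlib

section
/- Let G be a connected finite simple graph with at least two vertices, and let L be a Schrödinger operator (generalized Laplacian) for G. Then the smallest eigenvalue of L has multiplicity one; that is, the eigenspace of L corresponding to its minimal eigenvalue is one-dimensional. -/
/-!
This is the variational proof of Perron–Frobenius. Put `M = L - lam • 1`. Its eigenvalues are
nonnegative because `lam` is the smallest eigenvalue of `L`, so `M` is positive semidefinite
(`posSemidef_sub_smallest`), and for such a matrix `xᵀ M x = 0` forces `M x = 0`.
As the off-diagonal entries of `M` are nonpositive, replacing `x` by `|x|` does not increase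
`xᵀ M x`; hence the kernel of `M` is closed under entrywise absolute value (`ker_abs`).
If a nonnegative kernel vector vanishes at a vertex, then the row of `M x = 0` at that vertex is a
vanishing sum of nonpositive terms, so `x` vanishes at all neighbours, and by connectedness
everywhere (`ker_eq_zero`). A kernel vector is therefore determined by its value at a single
vertex, so the kernel is at most one-dimensional.
-/

/-- A Schrödinger operator (generalized Laplacian) for a finite simple graph `G`:
a real symmetric matrix whose off-diagonal entry at `i j` is negative when `i` and `j`
are adjacent and zero when they are not adjacent (diagonal entries arbitrary). -/
def IsSchrodingerOperator {V : Type*} [Fintype V] (G : SimpleGraph V)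
    (L : Matrix V V ℝ) : Prop :=
  L.IsSymm ∧ ∀ i j : V, i ≠ j →
    (G.Adj i j → L i j < 0) ∧ (¬ G.Adj i j → L i j = 0)

section Ground

variable {V : Type*} [Fintype V] [DecidableEq V]

lemma posSemidef_sub_smallest (L : Matrix V V ℝ) (hL : L.IsSymm) (lam : ℝ)
    (hmin : ∀ μ : ℝ, Module.End.HasEigenvalue (Matrix.toLin' L) μ → lam ≤ μ) :
    (L - lam • (1 : Matrix V V ℝ)).PosSemidef := by
  have hH : (L - lam • (1 : Matrix V V ℝ)).IsHermitian := by
    unfold Matrix.IsHermitian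
    rw [Matrix.conjTranspose_eq_transpose_of_trivial, Matrix.transpose_sub, hL.eq,
      Matrix.transpose_smul, Matrix.transpose_one]
  rw [hH.posSemidef_iff_eigenvalues_nonneg]
  intro i
  have hv := hH.mulVec_eigenvectorBasis i
  have hne : (hH.eigenvectorBasis i).ofLp ≠ 0 := by
    intro h
    exact hH.eigenvectorBasis.orthonormal.ne_zero i (by ext j; exact congrFun h j)
  have key : lam ≤ hH.eigenvalues i + lam := by
    apply hmin
    apply Module.End.hasEigenvalue_of_hasEigenvector (x := (hH.eigenvectorBasis i).ofLp)
    refine ⟨Module.End.mem_eigenspace_iff.2 ?_, hne⟩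
    rw [Matrix.sub_mulVec, Matrix.smul_mulVec, Matrix.one_mulVec, sub_eq_iff_eq_add] at hv
    rw [Matrix.toLin'_apply, hv, add_smul]
  simpa using key

/-- The kernel of a positive semidefinite matrix with nonpositive off-diagonal entries is closed
under entrywise absolute value. -/
lemma ker_abs (M : Matrix V V ℝ) (hM : M.PosSemidef) (hoff : ∀ i j, i ≠ j → M i j ≤ 0)
    (x : V → ℝ) (hx : M.mulVec x = 0) : M.mulVec (fun i => |x i|) = 0 := by
  have h0 : ∑ i, x i * ∑ j, M i j * x j = 0 := by
    have : x ⬝ᵥ M.mulVec x = 0 := by rw [hx, dotProduct_zero]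
    exact this
  have hle : ∑ i, |x i| * ∑ j, M i j * |x j| ≤ ∑ i, x i * ∑ j, M i j * x j := by
    simp only [Finset.mul_sum]
    refine Finset.sum_le_sum fun i _ => Finset.sum_le_sum fun j _ => ?_
    by_cases hij : i = j
    · subst hij
      exact le_of_eq (by linear_combination M i i * abs_mul_abs_self (x i))
    · have h1 : x i * x j ≤ |x i| * |x j| := by
        rw [← abs_mul]; exact le_abs_self _
      nlinarith [mul_le_mul_of_nonpos_left h1 (hoff i j hij)]
  rw [← hM.dotProduct_mulVec_zero_iff]
  apply le_antisymm
  · rw [h0] at hle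
    simpa [dotProduct, Matrix.mulVec] using hle
  · exact hM.dotProduct_mulVec_nonneg _

/-- Unique continuation: a ground state that vanishes at one vertex vanishes identically. -/
lemma ker_eq_zero (G : SimpleGraph V) (hG : G.Connected) (M : Matrix V V ℝ)
    (hM : M.PosSemidef) (hoff : ∀ i j, i ≠ j → M i j ≤ 0)
    (hadj : ∀ i j, G.Adj i j → M i j < 0)
    (x : V → ℝ) (hx : M.mulVec x = 0) (v : V) (hv : x v = 0) : x = 0 := by
  have habs := ker_abs M hM hoff x hx
  have step : ∀ i j, G.Adj i j → x i = 0 → x j = 0 := by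
    intro i j hij hi
    have hrow : ∑ k, M i k * |x k| = 0 := congrFun habs i
    have hnonpos : ∀ k ∈ Finset.univ, M i k * |x k| ≤ 0 := by
      intro k _
      by_cases hik : i = k
      · subst hik; simp [hi]
      · exact mul_nonpos_of_nonpos_of_nonneg (hoff i k hik) (abs_nonneg _)
    have := (Finset.sum_eq_zero_iff_of_nonpos hnonpos).1 hrow j (Finset.mem_univ j)
    simpa [(hadj i j hij).ne] using this
  funext w
  obtain ⟨p⟩ := hG.preconnected v w
  induction p with
  | nil => exact hv
  | cons h p ih => exact ih (step _ _ h hv)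

end Ground

/-- The smallest eigenvalue of a Schrödinger operator of a connected graph with at least
two vertices has multiplicity one: its eigenspace is one-dimensional. -/
theorem smallest_eigenvalue_multiplicity_one
    {V : Type*} [Fintype V] [DecidableEq V] (G : SimpleGraph V)
    (hG : G.Connected) (hV : 2 ≤ Fintype.card V)
    (L : Matrix V V ℝ) (hL : IsSchrodingerOperator G L)
    (lam : ℝ) (hlam : Module.End.HasEigenvalue (Matrix.toLin' L) lam)
    (hmin : ∀ μ : ℝ, Module.End.HasEigenvalue (Matrix.toLin' L) μ → lam ≤ μ) :
    Module.finrank ℝ (Module.End.eigenspace (Matrix.toLin' L) lam) = 1 := by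
  obtain ⟨hsymm, hent⟩ := hL
  have hM := posSemidef_sub_smallest L hsymm lam hmin
  have hentry : ∀ i j, i ≠ j → (L - lam • (1 : Matrix V V ℝ)) i j = L i j := by
    intro i j hij
    simp [Matrix.one_apply_ne hij]
  have hoff : ∀ i j, i ≠ j → (L - lam • (1 : Matrix V V ℝ)) i j ≤ 0 := by
    intro i j hij
    rw [hentry i j hij]
    by_cases h : G.Adj i j
    · exact ((hent i j hij).1 h).le
    · exact ((hent i j hij).2 h).le
  have hadj : ∀ i j, G.Adj i j → (L - lam • (1 : Matrix V V ℝ)) i j < 0 := by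
    intro i j h
    rw [hentry i j h.ne]
    exact (hent i j h.ne).1 h
  have hker : ∀ x ∈ Module.End.eigenspace (Matrix.toLin' L) lam, ∀ v, x v = 0 → x = 0 := by
    intro x hx
    refine fun v => ker_eq_zero G hG _ hM hoff hadj x ?_ v
    rw [Module.End.mem_eigenspace_iff, Matrix.toLin'_apply] at hx
    rw [Matrix.sub_mulVec, Matrix.smul_mulVec, Matrix.one_mulVec, hx, sub_self]
  obtain ⟨x, hx, hx0⟩ := hlam.exists_hasEigenvector
  obtain ⟨v⟩ := hG.nonempty
  have hxv : x v ≠ 0 := fun h => hx0 (hker x hx v h)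
  refine finrank_eq_one (⟨x, hx⟩ : Module.End.eigenspace (Matrix.toLin' L) lam)
    (fun h => hx0 (congrArg Subtype.val h)) ?_
  rintro ⟨y, hy⟩
  refine ⟨y v / x v, Subtype.ext ?_⟩
  -- The scalar makes the difference vanish at `v`, so unique continuation applies to it.
  have hz := hker _ (Submodule.sub_mem _ (Submodule.smul_mem _ (y v / x v) hx) hy) v
    (by simp [hxv])
  exact sub_eq_zero.1 hz
end

section
/- Let G be a finite simple graph, let L be a Schrödinger operator (generalized Laplacian) for G, and let f be a vector in the kernel of L (i.e., L·f = 0). Then for every vertex v with f(v) = 0, the vertex v is adjacent in G to some vertex w with f(w) > 0 if and only if v is adjacent in G to some vertex u with f(u) < 0. -/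
theorem exists_adj_neg_of_adj_pos
    {V : Type*} [Fintype V] {G : SimpleGraph V}
    {L : Matrix V V ℝ} (hL : IsSchrodingerOperator G L)
    {f : V → ℝ} (hf : L.mulVec f = 0) {v : V} (hv : f v = 0)
    (h : ∃ w : V, G.Adj v w ∧ 0 < f w) : ∃ u : V, G.Adj v u ∧ f u < 0 := by
  obtain ⟨w, hw, hfw⟩ := h
  by_contra! hnonneg
  have hsum : ∑ j, L v j * f j = 0 := congrFun hf v
  have hterm : ∀ j ∈ Finset.univ, L v j * f j ≤ 0 := by
    intro j _
    by_cases hj : v = j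
    · simp [← hj, hv]
    by_cases ha : G.Adj v j
    · exact mul_nonpos_of_nonpos_of_nonneg ((hL.2 v j hj).1 ha).le (hnonneg j ha)
    · simp [(hL.2 v j hj).2 ha]
  have hzero := (Finset.sum_eq_zero_iff_of_nonpos hterm).1 hsum w (Finset.mem_univ w)
  exact (mul_neg_of_neg_of_pos ((hL.2 v w hw.ne).1 hw) hfw).ne hzero

/-- For a vector `f` in the kernel of a Schrödinger operator, a vertex where `f`
vanishes is adjacent to a vertex with positive value if and only if it is adjacent
to a vertex with negative value. -/
theorem zero_vertex_adj_pos_iff_adj_neg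
    {V : Type*} [Fintype V] (G : SimpleGraph V)
    (L : Matrix V V ℝ) (hL : IsSchrodingerOperator G L)
    (f : V → ℝ) (hf : L.mulVec f = 0)
    (v : V) (hv : f v = 0) :
    (∃ w : V, G.Adj v w ∧ 0 < f w) ↔ (∃ u : V, G.Adj v u ∧ f u < 0) := by
  refine ⟨exists_adj_neg_of_adj_pos hL hf hv, fun h => ?_⟩
  have hneg : L.mulVec (-f) = 0 := by rw [Matrix.mulVec_neg, hf, neg_zero]
  simpa using exists_adj_neg_of_adj_pos hL hneg (v := v) (by simp [hv]) (by simpa using h)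
end

section
/- Let G be a connected finite simple graph with at least two vertices, and let L be a Schrödinger operator (generalized Laplacian) for G having exactly one negative eigenvalue counted with multiplicity (equivalently, whose second-smallest eigenvalue, counted with multiplicity, is zero) and nontrivial kernel. Let f be a nonzero vector in the kernel of L whose support is minimal, in the sense that no nonzero vector g in the kernel of L has support strictly contained in the support of f. Then the sets V⁺ = {v | f(v) > 0} and V⁻ = {v | f(v) < 0} are both nonempty, and the subgraphs of G induced on V⁺ and on V⁻ are both connected. -/
open Finset Matrix

section

variable {V : Type*} [Fintype V]

/-- Off the diagonal, a Schrödinger operator has nonpositive entries. -/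
lemma IsSchrodingerOperator.nonpos {G : SimpleGraph V} {L : Matrix V V ℝ}
    (hL : IsSchrodingerOperator G L) {i j : V} (h : i ≠ j) : L i j ≤ 0 := by
  by_cases ha : G.Adj i j
  · exact ((hL.2 i j h).1 ha).le
  · exact ((hL.2 i j h).2 ha).le

/-- With exactly one negative eigenvalue, there is an eigenvector `p` for it such that the
quadratic form is nonnegative on the orthogonal complement of `p`, and vanishes there only on the
kernel. -/
lemma exists_orthogonal_nonpos_imp_ker [DecidableEq V] (L : Matrix V V ℝ) (hHerm : L.IsHermitian)
    (hneg : (univ.filter fun i : V => hHerm.eigenvalues i < 0).card = 1) :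
    ∃ (μ : ℝ) (p : V → ℝ), μ < 0 ∧ p ≠ 0 ∧ L *ᵥ p = μ • p ∧
      ∀ x : V → ℝ, p ⬝ᵥ x = 0 → x ⬝ᵥ (L *ᵥ x) ≤ 0 → L *ᵥ x = 0 := by
  obtain ⟨i₀, hi₀⟩ := card_eq_one.1 hneg
  have hlt : hHerm.eigenvalues i₀ < 0 := by
    have : i₀ ∈ univ.filter fun i : V => hHerm.eigenvalues i < 0 := by simp [hi₀]
    simpa using this
  have hnn : ∀ i, i ≠ i₀ → 0 ≤ hHerm.eigenvalues i := by
    intro i hi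
    by_contra! h
    have : i ∈ univ.filter fun i : V => hHerm.eigenvalues i < 0 := by simpa using h
    rw [hi₀] at this
    exact hi (by simpa using this)
  set b := hHerm.eigenvectorBasis with hb
  have hmul : ∀ i, L *ᵥ (b i).ofLp = hHerm.eigenvalues i • (b i).ofLp :=
    fun i => hHerm.mulVec_eigenvectorBasis i
  have hin : ∀ (i : V) (y : V → ℝ), inner ℝ (b i) (WithLp.toLp 2 y) = (b i).ofLp ⬝ᵥ y := by
    intro i y
    rw [EuclideanSpace.inner_eq_star_dotProduct]
    simp [dotProduct_comm]
  have hcoef : ∀ (i : V) (x : V → ℝ),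
      (b i).ofLp ⬝ᵥ (L *ᵥ x) = hHerm.eigenvalues i * ((b i).ofLp ⬝ᵥ x) := by
    intro i x
    have hs : Lᵀ = L := by simpa [Matrix.IsHermitian] using hHerm
    rw [dotProduct_mulVec, ← mulVec_transpose, hs, hmul, smul_dotProduct, smul_eq_mul]
  refine ⟨hHerm.eigenvalues i₀, (b i₀).ofLp, hlt, ?_, hmul i₀, ?_⟩
  · intro h
    have h1 : b i₀ = 0 := by ext v; simp [h]
    have h2 := b.orthonormal.1 i₀
    rw [h1] at h2
    simp at h2
  · intro x hx hq
    have hexp : x ⬝ᵥ (L *ᵥ x) =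
        ∑ i, hHerm.eigenvalues i * ((b i).ofLp ⬝ᵥ x) ^ 2 := by
      have h := b.sum_inner_mul_inner (WithLp.toLp 2 x) (WithLp.toLp 2 (L *ᵥ x))
      rw [EuclideanSpace.inner_eq_star_dotProduct] at h
      have h' : x ⬝ᵥ (L *ᵥ x) = (L *ᵥ x) ⬝ᵥ star x := by simp [dotProduct_comm]
      rw [h']
      refine Eq.trans h.symm (sum_congr rfl fun i _ => ?_)
      rw [real_inner_comm, hin, hin, hcoef]
      ring
    have hterm : ∀ i ∈ univ, 0 ≤ hHerm.eigenvalues i * ((b i).ofLp ⬝ᵥ x) ^ 2 := by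
      intro i _
      by_cases hi : i = i₀
      · subst hi; simp [hx]
      · exact mul_nonneg (hnn i hi) (sq_nonneg _)
    have hz := (sum_eq_zero_iff_of_nonneg hterm).1 (le_antisymm (hexp ▸ hq) (sum_nonneg hterm))
    have hz' : WithLp.toLp 2 (L *ᵥ x) = (0 : EuclideanSpace ℝ V) := by
      refine InnerProductSpace.ext_inner_left_basis b.toBasis fun i => ?_
      rw [b.coe_toBasis]
      rw [hin, hcoef, inner_zero_right]
      rcases mul_eq_zero.1 (hz i (mem_univ i)) with h | h
      · rw [h, zero_mul]
      · rw [pow_eq_zero_iff two_ne_zero] at h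
        rw [h, mul_zero]
    simpa using congrArg WithLp.ofLp hz'

/-- A nonzero kernel vector takes a negative value as soon as `L` has a negative eigenvalue. -/
lemma exists_neg_entry (G : SimpleGraph V) (hG : G.Connected) (L : Matrix V V ℝ)
    (hL : IsSchrodingerOperator G L) {μ : ℝ} {p : V → ℝ} (hμ : μ < 0) (hp : p ≠ 0)
    (hLp : L *ᵥ p = μ • p) (f : V → ℝ) (hf0 : f ≠ 0) (hker : L *ᵥ f = 0) :
    ∃ v, f v < 0 := by
  by_contra! hf
  have hstep : ∀ u v, G.Adj u v → f u = 0 → f v = 0 := by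
    intro u v huv hu
    have h : ∑ j, L u j * f j = 0 := congrFun hker u
    have hle : ∀ j ∈ univ, L u j * f j ≤ 0 := by
      intro j _
      by_cases hj : u = j
      · subst hj; simp [hu]
      · exact mul_nonpos_of_nonpos_of_nonneg (hL.nonpos hj) (hf j)
    have := (sum_eq_zero_iff_of_nonpos hle).1 h v (mem_univ v)
    exact (mul_eq_zero.1 this).resolve_left ((hL.2 u v huv.ne).1 huv).ne
  have hpos : ∀ v, 0 < f v := by
    intro v
    refine lt_of_le_of_ne (hf v) fun h => hf0 ?_
    have hw : ∀ u w, G.Walk u w → f u = 0 → f w = 0 := by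
      intro u w q
      induction q with
      | nil => exact id
      | cons h _ ih => exact fun hu => ih (hstep _ _ h hu)
    funext w
    obtain ⟨q⟩ := hG.preconnected v w
    exact hw v w q h.symm
  obtain ⟨k, hk⟩ := Function.ne_iff.1 hp
  obtain ⟨i, -, hi⟩ := exists_max_image univ (fun v => |p v| / f v) ⟨k, mem_univ k⟩
  have hpi : p i ≠ 0 := by
    intro h
    have h1 := hi k (mem_univ k)
    simp only [h, abs_zero, zero_div] at h1
    exact absurd h1 (not_le.2 (div_pos (abs_pos.2 hk) (hpos k)))
  -- The comparison vector is `u = |p i| f - sign (p i) f i p`, which is nonnegative and zero at `i`.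
  obtain ⟨σ, hσ, hσi⟩ : ∃ σ : ℝ, |σ| = 1 ∧ σ * p i = |p i| := by
    rcases le_total 0 (p i) with h | h
    · exact ⟨1, by simp, by rw [abs_of_nonneg h, one_mul]⟩
    · exact ⟨-1, by simp, by rw [abs_of_nonpos h]; ring⟩
  have hu : ∀ j, 0 ≤ |p i| * f j - σ * f i * p j := by
    intro j
    have h1 := hi j (mem_univ j)
    rw [div_le_div_iff₀ (hpos j) (hpos i)] at h1
    have h2 : σ * p j ≤ |p j| := by
      have := le_abs_self (σ * p j)
      rwa [abs_mul, hσ, one_mul] at this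
    nlinarith [hpos i]
  have hL1 : ∑ j, L i j * f j = 0 := congrFun hker i
  have hL2 : ∑ j, L i j * p j = μ * p i := congrFun hLp i
  have hsum : ∑ j, L i j * (|p i| * f j - σ * f i * p j) = -(μ * f i * |p i|) := by
    have : ∀ j, L i j * (|p i| * f j - σ * f i * p j)
        = |p i| * (L i j * f j) - σ * f i * (L i j * p j) := fun j => by ring
    simp_rw [this]
    rw [sum_sub_distrib, ← mul_sum, ← mul_sum, hL1, hL2, ← hσi]
    ring
  have hle : ∑ j, L i j * (|p i| * f j - σ * f i * p j) ≤ 0 := by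
    refine sum_nonpos fun j _ => ?_
    by_cases hj : i = j
    · subst hj
      rw [← hσi]
      exact le_of_eq (by ring)
    · exact mul_nonpos_of_nonpos_of_nonneg (hL.nonpos hj) (hu j)
  have : 0 < -(μ * f i * |p i|) := by
    have := mul_pos (mul_pos (neg_pos.2 hμ) (hpos i)) (abs_pos.2 hpi)
    linarith
  linarith

/-- If `s` is supported on the positive support of a kernel vector `f` and takes equal values at
adjacent vertices of it, then the quadratic form of `L` is nonpositive at `s f`. -/
lemma quadForm_mul_nonpos (G : SimpleGraph V) (L : Matrix V V ℝ)
    (hL : IsSchrodingerOperator G L) (f : V → ℝ) (hker : L *ᵥ f = 0) (s : V → ℝ)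
    (hs0 : ∀ v, ¬ 0 < f v → s v = 0)
    (hs : ∀ u v, 0 < f u → 0 < f v → G.Adj u v → s u = s v) :
    (s * f) ⬝ᵥ (L *ᵥ (s * f)) ≤ 0 := by
  have hz : ∑ i, ∑ j, s i ^ 2 * f i * (L i j * f j) = 0 := by
    refine sum_eq_zero fun i _ => ?_
    rw [← mul_sum]
    have h : ∑ j, L i j * f j = 0 := congrFun hker i
    rw [h, mul_zero]
  have he : (s * f) ⬝ᵥ (L *ᵥ (s * f)) = ∑ i, ∑ j, s i * f i * (L i j * (s j * f j)) := by
    simp only [dotProduct, mulVec, mul_sum, Pi.mul_apply]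
  rw [he, ← hz]
  refine sum_le_sum fun i _ => sum_le_sum fun j _ => ?_
  by_cases hij : i = j
  · subst hij
    exact le_of_eq (by ring)
  by_cases hi : 0 < f i
  · by_cases hj : 0 < f j
    · by_cases ha : G.Adj i j
      · rw [hs i j hi hj ha]
        exact le_of_eq (by ring)
      · rw [(hL.2 i j hij).2 ha]
        simp
    · rw [hs0 j hj]
      have h1 : 0 ≤ L i j * f j := mul_nonneg_of_nonpos_of_nonpos (hL.nonpos hij) (not_lt.1 hj)
      have h2 : 0 ≤ s i ^ 2 * f i * (L i j * f j) := by positivity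
      simpa using h2
  · simp [hs0 i hi]

lemma posSupport_connected (G : SimpleGraph V) (L : Matrix V V ℝ)
    (hL : IsSchrodingerOperator G L) (p : V → ℝ)
    (hp : ∀ x : V → ℝ, p ⬝ᵥ x = 0 → x ⬝ᵥ (L *ᵥ x) ≤ 0 → L *ᵥ x = 0)
    (f : V → ℝ) (hker : L *ᵥ f = 0)
    (hmin : ∀ g : V → ℝ, g ≠ 0 → L *ᵥ g = 0 →
      Function.support g ⊆ Function.support f → Function.support g = Function.support f)
    (hpos : ∃ v, 0 < f v) (hneg : ∃ v, f v < 0) :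
    (G.induce {v : V | 0 < f v}).Connected := by
  classical
  obtain ⟨v₀, hv₀⟩ := hpos
  have : Nonempty {v : V | 0 < f v} := ⟨⟨v₀, hv₀⟩⟩
  refine ⟨?_⟩
  rintro ⟨u, hu⟩ ⟨w, hw⟩
  by_contra hnr
  set H := G.induce {v : V | 0 < f v} with hH
  -- `A` is the component of `u`; the part `B` is its complement in the positive support.
  let A : Set V := {v | ∃ h : 0 < f v, H.Reachable ⟨u, hu⟩ ⟨v, h⟩}
  have huA : u ∈ A := ⟨hu, SimpleGraph.Reachable.refl _⟩
  have hwA : w ∉ A := fun ⟨_, h⟩ => hnr h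
  have hA : ∀ x y, 0 < f x → 0 < f y → G.Adj x y → x ∈ A → y ∈ A := by
    rintro x y hx hy hxy ⟨_, h⟩
    have hadj : H.Adj ⟨x, hx⟩ ⟨y, hy⟩ := hxy
    exact ⟨hy, h.trans hadj.reachable⟩
  let sA : V → ℝ := fun v => if v ∈ A then 1 else 0
  let sB : V → ℝ := fun v => if 0 < f v ∧ v ∉ A then 1 else 0
  obtain ⟨α, β, hne, hαβ⟩ : ∃ α β : ℝ, (α ≠ 0 ∨ β ≠ 0) ∧
      α * (p ⬝ᵥ (sA * f)) + β * (p ⬝ᵥ (sB * f)) = 0 := by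
    by_cases h : p ⬝ᵥ (sA * f) = 0
    · exact ⟨1, 0, by simp, by simp [h]⟩
    · exact ⟨p ⬝ᵥ (sB * f), -(p ⬝ᵥ (sA * f)), Or.inr (neg_ne_zero.2 h), by ring⟩
  let s : V → ℝ := α • sA + β • sB
  have hsu : s u = α := by simp [s, sA, sB, huA]
  have hsw : s w = β := by
    have hw' : 0 < f w := hw
    simp [s, sA, sB, hwA, hw']
  have hs0 : ∀ v, ¬ 0 < f v → s v = 0 := by
    intro v hv
    have : v ∉ A := fun ⟨h, _⟩ => hv h
    simp only [s, sA, sB, Pi.add_apply, Pi.smul_apply, this, hv]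
    simp
  have hs : ∀ x y, 0 < f x → 0 < f y → G.Adj x y → s x = s y := by
    intro x y hx hy hxy
    have hiff : x ∈ A ↔ y ∈ A := ⟨hA x y hx hy hxy, hA y x hy hx hxy.symm⟩
    simp only [s, sA, sB, Pi.add_apply, Pi.smul_apply, hiff, hx, hy]
  have horth : p ⬝ᵥ (s * f) = 0 := by
    have : s * f = α • (sA * f) + β • (sB * f) := by
      simp only [s, add_mul, smul_mul_assoc]
    rw [this, dotProduct_add, dotProduct_smul, dotProduct_smul, smul_eq_mul, smul_eq_mul, hαβ]
  have hk := hp _ horth (quadForm_mul_nonpos G L hL f hker s hs0 hs)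
  have hnz : s * f ≠ 0 := by
    intro h
    rcases hne with h1 | h1
    · have h2 : s u * f u = 0 := congrFun h u
      rw [hsu] at h2
      exact mul_ne_zero h1 (ne_of_gt hu) h2
    · have h2 : s w * f w = 0 := congrFun h w
      rw [hsw] at h2
      exact mul_ne_zero h1 (ne_of_gt hw) h2
  have hsupp := hmin _ hnz hk (fun v hv => right_ne_zero_of_mul hv)
  obtain ⟨v, hv⟩ := hneg
  have hvs : v ∈ Function.support (s * f) := by
    rw [hsupp]
    exact hv.ne
  exact left_ne_zero_of_mul hvs (hs0 v (not_lt.2 hv.le))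

end

open Finset in
/-- Discrete nodal theorem: if `L` is a Schrödinger operator for a connected graph `G`
with at least two vertices, `L` has exactly one negative eigenvalue (with multiplicity),
and `f` is a nonzero kernel vector of minimal support, then the positive and negative
supports of `f` are nonempty and induce connected subgraphs of `G`. -/
theorem nodal_theorem
    {V : Type*} [Fintype V] [DecidableEq V] (G : SimpleGraph V)
    (hG : G.Connected) (hV : 2 ≤ Fintype.card V)
    (L : Matrix V V ℝ) (hL : IsSchrodingerOperator G L)
    (hHerm : L.IsHermitian)
    (hneg : (univ.filter fun i : V => hHerm.eigenvalues i < 0).card = 1)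
    (f : V → ℝ) (hf0 : f ≠ 0) (hker : L.mulVec f = 0)
    (hmin : ∀ g : V → ℝ, g ≠ 0 → L.mulVec g = 0 →
      Function.support g ⊆ Function.support f →
      Function.support g = Function.support f) :
    ({v : V | 0 < f v}.Nonempty ∧ {v : V | f v < 0}.Nonempty) ∧
    (G.induce {v : V | 0 < f v}).Connected ∧
    (G.induce {v : V | f v < 0}).Connected := by
  obtain ⟨μ, p, hμ, hp0, hLp, hp⟩ := exists_orthogonal_nonpos_imp_ker L hHerm hneg
  have hker' : L *ᵥ (-f) = 0 := by rw [mulVec_neg, hker, neg_zero]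
  have hmin' : ∀ g : V → ℝ, g ≠ 0 → L *ᵥ g = 0 →
      Function.support g ⊆ Function.support (-f) →
      Function.support g = Function.support (-f) := by
    simpa only [Function.support_neg] using hmin
  have hn : ∃ v, f v < 0 := exists_neg_entry G hG L hL hμ hp0 hLp f hf0 hker
  have hpos : ∃ v, 0 < f v := by
    obtain ⟨v, hv⟩ := exists_neg_entry G hG L hL hμ hp0 hLp (-f) (neg_ne_zero.2 hf0) hker'
    exact ⟨v, by simpa using hv⟩
  refine ⟨⟨hpos, hn⟩, posSupport_connected G L hL p hp f hker hmin hpos hn, ?_⟩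
  have h := posSupport_connected G L hL p hp (-f) hker' hmin' (by simpa using hn)
    (by simpa using hpos)
  have hset : {v : V | 0 < (-f) v} = {v : V | f v < 0} := by
    ext v
    simp
  rwa [hset] at h
end
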